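/- Let Z be a real random variable with Z ~ N(0, σ²), σ > 0, let α > 0 and m > 0, and set W = Z + m. Then P([1 + exp(2α) exp(−αW²/σ²)]⁻¹ W ≤ m) > 1/2 = P(Z ≤ 0). -/

import Mathlib

open MeasureTheory Matrix Real Filter Topology ENNReal NNReal

noncomputable section

/-- Euclidean norm of a finite tuple. -/
def enorm2 {ι : Type*} [Fintype ι] (v : ι → ℝ) : ℝ := Real.sqrt (∑ i, v i ^ 2)

/-- The `N(0, σ² I)` distribution on `ι → ℝ`, given by its Lebesgue density. -/
def gaussPi (ι : Type*) [Fintype ι] (σ2 : ℝ) : Measure (ι → ℝ) :=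
  volume.withDensity fun x => ENNReal.ofReal
    ((2 * π * σ2) ^ (-(Fintype.card ι : ℝ) / 2) * Real.exp (-(enorm2 x) ^ 2 / (2 * σ2)))

/-- The Lebesgue density of the `N(0, σ² Q⁻¹)` distribution on `ι → ℝ`
(for `Q` symmetric positive definite). -/
def gaussCovDens {ι : Type*} [Fintype ι] [DecidableEq ι] (σ2 : ℝ) (Q : Matrix ι ι ℝ)
    (x : ι → ℝ) : ℝ :=
  (2 * π * σ2) ^ (-(Fintype.card ι : ℝ) / 2) * Real.sqrt Q.det *
    Real.exp (-(x ⬝ᵥ Q.mulVec x) / (2 * σ2))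

/-- The `N(0, σ² Q⁻¹)` distribution on `ι → ℝ` (for `Q` symmetric positive definite),
given by its Lebesgue density. -/
def gaussCov {ι : Type*} [Fintype ι] [DecidableEq ι] (σ2 : ℝ) (Q : Matrix ι ι ℝ) :
    Measure (ι → ℝ) :=
  volume.withDensity fun x => ENNReal.ofReal (gaussCovDens σ2 Q x)

open Classical in
/-- Symmetric positive semidefinite square root (junk value `0` off the psd cone). -/
def msqrt {ι : Type*} [Fintype ι] [DecidableEq ι] (A : Matrix ι ι ℝ) : Matrix ι ι ℝ :=
  if h : A.PosSemidef then
    h.1.eigenvectorUnitary.1 * diagonal (RCLike.ofReal ∘ Real.sqrt ∘ h.1.eigenvalues) *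
      (star h.1.eigenvectorUnitary : Matrix ι ι ℝ)
  else 0

open Classical in
/-- Smallest eigenvalue of a symmetric matrix (junk value `0` otherwise). -/
def lamMin {ι : Type*} [Fintype ι] [DecidableEq ι] (A : Matrix ι ι ℝ) : ℝ :=
  if h : A.IsHermitian then ⨅ i, h.eigenvalues i else 0

open Classical in
/-- Largest eigenvalue of a symmetric matrix (junk value `0` otherwise). -/
def lamMax {ι : Type*} [Fintype ι] [DecidableEq ι] (A : Matrix ι ι ℝ) : ℝ :=
  if h : A.IsHermitian then ⨆ i, h.eigenvalues i else 0

variable {n k₁ k₂ : ℕ}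

/-- First block of columns of the design matrix. -/
def X1 (X : Matrix (Fin n) (Fin k₁ ⊕ Fin k₂) ℝ) : Matrix (Fin n) (Fin k₁) ℝ :=
  X.submatrix id Sum.inl

/-- Second block of columns of the design matrix. -/
def X2 (X : Matrix (Fin n) (Fin k₁ ⊕ Fin k₂) ℝ) : Matrix (Fin n) (Fin k₂) ℝ :=
  X.submatrix id Sum.inr

/-- Unrestricted least squares estimator. -/
def betaU (X : Matrix (Fin n) (Fin k₁ ⊕ Fin k₂) ℝ) (Y : Fin n → ℝ) : (Fin k₁ ⊕ Fin k₂) → ℝ :=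
  (Xᵀ * X)⁻¹.mulVec (Xᵀ.mulVec Y)

/-- Restricted least squares estimator. -/
def betaR (X : Matrix (Fin n) (Fin k₁ ⊕ Fin k₂) ℝ) (Y : Fin n → ℝ) : (Fin k₁ ⊕ Fin k₂) → ℝ :=
  Sum.elim (((X1 X)ᵀ * X1 X)⁻¹.mulVec ((X1 X)ᵀ.mulVec Y)) (fun _ => 0)

/-- Risk estimate of the restricted model. -/
def rR (X : Matrix (Fin n) (Fin k₁ ⊕ Fin k₂) ℝ) (σ2 : ℝ) (Y : Fin n → ℝ) : ℝ :=
  Y ⬝ᵥ Y - betaR X Y ⬝ᵥ (Xᵀ * X).mulVec (betaR X Y) + σ2 * (2 * k₁ - n)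

/-- Risk estimate of the unrestricted model. -/
def rU (X : Matrix (Fin n) (Fin k₁ ⊕ Fin k₂) ℝ) (σ2 : ℝ) (Y : Fin n → ℝ) : ℝ :=
  Y ⬝ᵥ Y - betaU X Y ⬝ᵥ (Xᵀ * X).mulVec (betaU X Y) + σ2 * (2 * (k₁ + k₂) - n)

/-- The model averaging weight `λ̂`. -/
def lamHat (α σ2 : ℝ) (X : Matrix (Fin n) (Fin k₁ ⊕ Fin k₂) ℝ) (Y : Fin n → ℝ) : ℝ :=
  Real.exp (-(α * rR X σ2 Y) / σ2) /
    (Real.exp (-(α * rR X σ2 Y) / σ2) + Real.exp (-(α * rU X σ2 Y) / σ2))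

/-- Leung and Barron's model averaging estimator `β̃`. -/
def mavg (α σ2 : ℝ) (X : Matrix (Fin n) (Fin k₁ ⊕ Fin k₂) ℝ) (Y : Fin n → ℝ) :
    (Fin k₁ ⊕ Fin k₂) → ℝ :=
  lamHat α σ2 X Y • betaR X Y + (1 - lamHat α σ2 X Y) • betaU X Y

/-- Projection on the column space of `X₁`. -/
def projR (X : Matrix (Fin n) (Fin k₁ ⊕ Fin k₂) ℝ) : Matrix (Fin n) (Fin n) ℝ :=
  X1 X * ((X1 X)ᵀ * X1 X)⁻¹ * (X1 X)ᵀ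

/-- Projection on the column space of `X`. -/
def projU (X : Matrix (Fin n) (Fin k₁ ⊕ Fin k₂) ℝ) : Matrix (Fin n) (Fin n) ℝ :=
  X * (Xᵀ * X)⁻¹ * Xᵀ

/-- The distribution `P_{n,β,σ}` of `Y = Xβ + u`, `u ~ N(0, σ² Iₙ)`. -/
def Pmeas (X : Matrix (Fin n) (Fin k₁ ⊕ Fin k₂) ℝ) (β : (Fin k₁ ⊕ Fin k₂) → ℝ) (σ2 : ℝ) :
    Measure (Fin n → ℝ) :=
  (gaussPi (Fin n) σ2).map (fun u => X.mulVec β + u)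

/-- The function `h_{a,b}(ξ) = ξ / (1 + a exp(−ξ²/b))`. -/
def hfun (a b ξ : ℝ) : ℝ := ξ / (1 + a * Real.exp (-ξ ^ 2 / b))

/-- The inverse `g_{a,b}` of `h_{a,b}`. -/
def gfun (a b : ℝ) : ℝ → ℝ := Function.invFun (hfun a b)

open Classical in
/-- `g(‖w‖) w / ‖w‖`, with the convention that this is `0` for `w = 0`. -/
def gdir (a b : ℝ) {ι : Type*} [Fintype ι] (w : ι → ℝ) : ι → ℝ :=
  if w = 0 then 0 else (gfun a b (enorm2 w) / enorm2 w) • w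


/-- The finite-sample density `f_{n,β,σ}` of `√n(β̃ − β)` (Theorem 3 of the paper). -/
def fdens {n k₁ k₂ : ℕ} (X : Matrix (Fin n) (Fin k₁ ⊕ Fin k₂) ℝ)
    (β : (Fin k₁ ⊕ Fin k₂) → ℝ) (σ2 α : ℝ) (t : (Fin k₁ ⊕ Fin k₂) → ℝ) : ℝ :=
  let a := Real.exp (2 * α * k₂)
  let b := σ2 / α
  let S := (X2 X)ᵀ * (1 - projR X) * X2 X
  let w := (Real.sqrt n)⁻¹ • (msqrt S).mulVec ((t ∘ Sum.inr) + Real.sqrt n • (β ∘ Sum.inr))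
  (2 * π * σ2) ^ (-((k₁ : ℝ) + k₂) / 2) * Real.sqrt (((n : ℝ)⁻¹ • (Xᵀ * X)).det) *
    Real.exp (-(enorm2 ((Real.sqrt n)⁻¹ •
        ((msqrt ((X1 X)ᵀ * X1 X)).mulVec (t ∘ Sum.inl) +
          ((msqrt ((X1 X)ᵀ * X1 X))⁻¹ * (X1 X)ᵀ * X2 X).mulVec (t ∘ Sum.inr)))) ^ 2 /
      (2 * σ2)) *
    (1 + Real.exp (-(α / σ2) * gfun a b (enorm2 w) ^ 2 + 2 * α * k₂)) ^ (k₂ : ℕ) *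
    (1 + (2 * α / σ2) * gfun a b (enorm2 w) ^ 2 *
        (1 + Real.exp ((α / σ2) * gfun a b (enorm2 w) ^ 2 - 2 * α * k₂))⁻¹)⁻¹ *
    Real.exp (-(enorm2 (gdir a b w - (msqrt S).mulVec (β ∘ Sum.inr))) ^ 2 / (2 * σ2))

/-- The density `f_{∞,γ}` of the limiting distribution (formula (13) of the paper),
stated for a general symmetric positive definite matrix in place of `Q`. -/
def fInfty {k₁ k₂ : ℕ} (Q : Matrix (Fin k₁ ⊕ Fin k₂) (Fin k₁ ⊕ Fin k₂) ℝ) (σ2 α : ℝ)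
    (γ : Fin k₂ → ℝ) (t : (Fin k₁ ⊕ Fin k₂) → ℝ) : ℝ :=
  let a := Real.exp (2 * α * k₂)
  let b := σ2 / α
  let S := Q.toBlocks₂₂ - Q.toBlocks₂₁ * Q.toBlocks₁₁⁻¹ * Q.toBlocks₁₂
  let w := (msqrt S).mulVec ((t ∘ Sum.inr) + γ)
  (2 * π * σ2) ^ (-((k₁ : ℝ) + k₂) / 2) * Real.sqrt Q.det *
    Real.exp (-(enorm2 ((msqrt Q.toBlocks₁₁).mulVec (t ∘ Sum.inl) +
        ((msqrt Q.toBlocks₁₁)⁻¹ * Q.toBlocks₁₂).mulVec (t ∘ Sum.inr))) ^ 2 / (2 * σ2)) *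
    (1 + Real.exp (-(α / σ2) * gfun a b (enorm2 w) ^ 2 + 2 * α * k₂)) ^ (k₂ : ℕ) *
    (1 + (2 * α / σ2) * gfun a b (enorm2 w) ^ 2 *
        (1 + Real.exp ((α / σ2) * gfun a b (enorm2 w) ^ 2 - 2 * α * k₂))⁻¹)⁻¹ *
    Real.exp (-(enorm2 (gdir a b w - (msqrt S).mulVec γ)) ^ 2 / (2 * σ2))


/-- The limiting law (12): the distribution of
`B_∞γ + C_∞Z₁ + [1 + exp(2αk₂) exp(−α‖Z₂ + (Q₂₂ − Q₂₁Q₁₁⁻¹Q₁₂)^{1/2}γ‖²/σ²)]⁻¹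
  · (D_∞Z₂ − B_∞γ)` with `Z₁ ~ N(0, σ²I_{k₁})`, `Z₂ ~ N(0, σ²I_{k₂})` independent. -/
def limitLaw {k₁ k₂ : ℕ} (Q : Matrix (Fin k₁ ⊕ Fin k₂) (Fin k₁ ⊕ Fin k₂) ℝ) (σ2 α : ℝ)
    (γ : Fin k₂ → ℝ) : Measure ((Fin k₁ ⊕ Fin k₂) → ℝ) :=
  ((gaussPi (Fin k₁) σ2).prod (gaussPi (Fin k₂) σ2)).map
    (fun Z : (Fin k₁ → ℝ) × (Fin k₂ → ℝ) =>
      (fromRows (Q.toBlocks₁₁⁻¹ * Q.toBlocks₁₂) (-1)).mulVec γ +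
      (fromRows (msqrt Q.toBlocks₁₁)⁻¹ 0).mulVec Z.1 +
      (1 + Real.exp (2 * α * k₂) *
          Real.exp (-α * (enorm2 (Z.2 +
            (msqrt (Q.toBlocks₂₂ - Q.toBlocks₂₁ * Q.toBlocks₁₁⁻¹ * Q.toBlocks₁₂)).mulVec
              γ)) ^ 2 / σ2))⁻¹ •
        ((fromRows
            (-(Q.toBlocks₁₁⁻¹ * Q.toBlocks₁₂ *
              (msqrt (Q.toBlocks₂₂ - Q.toBlocks₂₁ * Q.toBlocks₁₁⁻¹ * Q.toBlocks₁₂))⁻¹))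
            ((msqrt (Q.toBlocks₂₂ - Q.toBlocks₂₁ * Q.toBlocks₁₁⁻¹ * Q.toBlocks₁₂))⁻¹)).mulVec
            Z.2 -
          (fromRows (Q.toBlocks₁₁⁻¹ * Q.toBlocks₁₂) (-1)).mulVec γ))


/-- for `Z ~ N(0,σ²)`, `m > 0` and `W = Z + m`,
`P([1 + exp(2α)exp(−αW²/σ²)]⁻¹ W ≤ m) > 1/2 = P(Z ≤ 0)`. -/
theorem statement15 (σ α m : ℝ) (hσ : 0 < σ) (hα : 0 < α) (hm : 0 < m) :
    (1 / 2 : ℝ≥0∞) < (ProbabilityTheory.gaussianReal 0 (Real.toNNReal (σ ^ 2)))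
        {z | (1 + Real.exp (2 * α) * Real.exp (-α * (z + m) ^ 2 / σ ^ 2))⁻¹ * (z + m) ≤ m} ∧
    (ProbabilityTheory.gaussianReal 0 (Real.toNNReal (σ ^ 2))) {z | z ≤ 0} =
      (1 / 2 : ℝ≥0∞) := by
  set v : ℝ≥0 := Real.toNNReal (σ ^ 2) with hv_def
  have hv : v ≠ 0 := by
    have : 0 < v := Real.toNNReal_pos.2 (by positivity)
    exact this.ne'
  set μ := ProbabilityTheory.gaussianReal 0 v with hμ
  have : IsProbabilityMeasure μ := by rw [hμ]; infer_instance
  have hac : μ ≪ volume := ProbabilityTheory.gaussianReal_absolutelyContinuous 0 hv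
  have hac' : volume ≪ μ := ProbabilityTheory.gaussianReal_absolutelyContinuous' 0 hv
  have hhalf : μ {z | z ≤ 0} = (1 / 2 : ℝ≥0∞) := by
    have h1 : μ (Set.Iic 0) = μ (Set.Ici 0) := by
      have h := ProbabilityTheory.gaussianReal_map_neg (μ := 0) (v := v)
      rw [neg_zero, ← hμ] at h
      calc μ (Set.Iic 0) = (μ.map (fun x => -x)) (Set.Iic 0) := by rw [h]
        _ = μ ((fun x => -x) ⁻¹' Set.Iic 0) := Measure.map_apply measurable_neg measurableSet_Iic
        _ = μ (Set.Ici 0) := by congr 1; ext x; simp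
    have h2 : μ (Set.Ici 0) = μ (Set.Ioi 0) := by
      refine le_antisymm ?_ (measure_mono Set.Ioi_subset_Ici_self)
      have h0 : μ {(0 : ℝ)} = 0 := hac (by simp)
      calc μ (Set.Ici 0) ≤ μ ({(0 : ℝ)} ∪ Set.Ioi 0) := by
            apply measure_mono
            intro x hx
            rcases eq_or_lt_of_le (Set.mem_Ici.1 hx) with h | h
            · left; exact h.symm
            · right; exact h
        _ ≤ μ {(0 : ℝ)} + μ (Set.Ioi 0) := measure_union_le _ _
        _ = μ (Set.Ioi 0) := by rw [h0, zero_add]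
    have h3 : μ (Set.Iic 0) + μ (Set.Ioi 0) = 1 := by
      rw [← Set.compl_Iic, measure_add_measure_compl measurableSet_Iic, measure_univ]
    rw [← h2, ← h1, ← two_mul] at h3
    change μ (Set.Iic 0) = _
    rw [one_div]
    apply ENNReal.eq_inv_of_mul_eq_one_left
    rw [mul_comm]
    exact h3
  refine ⟨?_, hhalf⟩
  set f : ℝ → ℝ := fun z =>
    (1 + Real.exp (2 * α) * Real.exp (-α * (z + m) ^ 2 / σ ^ 2))⁻¹ * (z + m) with hf
  have hden : ∀ z : ℝ, 1 < 1 + Real.exp (2 * α) * Real.exp (-α * (z + m) ^ 2 / σ ^ 2) := by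
    intro z
    have := mul_pos (Real.exp_pos (2 * α)) (Real.exp_pos (-α * (z + m) ^ 2 / σ ^ 2))
    linarith
  have hlt : ∀ z : ℝ, z ≤ 0 → f z < m := by
    intro z hz
    have hd := hden z
    change (1 + Real.exp (2 * α) * Real.exp (-α * (z + m) ^ 2 / σ ^ 2))⁻¹ * (z + m) < m
    rw [inv_mul_lt_iff₀ (by linarith)]
    nlinarith
  have hcont : Continuous f := by
    refine Continuous.mul (Continuous.inv₀ (by fun_prop) fun z => ?_) (by fun_prop)
    have := hden z
    linarith
  have hopen : IsOpen {z | f z < m} := isOpen_lt hcont continuous_const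
  have hpos : 0 < μ ({z | f z < m} ∩ Set.Ioi 0) := by
    have hne : ({z | f z < m} ∩ Set.Ioi (0 : ℝ)).Nonempty := by
      have hcl : (0 : ℝ) ∈ closure (Set.Ioi (0 : ℝ)) := by rw [closure_Ioi]; simp
      exact mem_closure_iff.1 hcl _ hopen (hlt 0 le_rfl)
    have hvol := (hopen.inter isOpen_Ioi).measure_pos volume hne
    rw [pos_iff_ne_zero] at hvol ⊢
    exact fun h => hvol (hac' h)
  have hdisj : Disjoint {z : ℝ | z ≤ 0} ({z | f z < m} ∩ Set.Ioi 0) := by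
    rw [Set.disjoint_left]
    rintro x hx ⟨_, hx'⟩
    exact not_le.2 (Set.mem_Ioi.1 hx') (show x ≤ 0 from hx)
  calc (1 / 2 : ℝ≥0∞) < 1 / 2 + μ ({z | f z < m} ∩ Set.Ioi 0) :=
        ENNReal.lt_add_right (by simp) hpos.ne'
    _ = μ ({z : ℝ | z ≤ 0} ∪ ({z | f z < m} ∩ Set.Ioi 0)) := by
        rw [measure_union hdisj (hopen.inter isOpen_Ioi).measurableSet, hhalf]
    _ ≤ μ {z | f z ≤ m} := by
        apply measure_mono
        rintro x (hx | ⟨hx, _⟩)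
        · exact (hlt x hx).le
        · exact le_of_lt (show f x < m from hx)

end
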